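/- arXiv:1905.03501 — 2 statements merged into one kernel-verified Lean document; each statement's English description precedes it below -/
import Mathlib

section
/- Let π and π* be two stationary policies for a finite entropy-regularized MDP with discount γ ∈ [0,1). Then the entropy-regularized returns satisfy the performance-difference identity with demonstrations: η(π*) − η(π) = E_{τ∼π*}[ Σ_{t=0}^∞ γ^t ( A^π(s_t, a_t) + ε h^{π*}_{s_t} ) ], where the trajectory τ = (s_0, a_0, s_1, a_1, …) is generated by s_0 ∼ μ, a_t ∼ π*(·|s_t), s_{t+1} ∼ P(·|s_t, a_t). -/
/-!
The advantage of `π` is a one-step quantity: `A^π(s,a) = r(s,a) + γ E[V^π(s')] - V^π(s)`.  Hence,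
with `w t = E_{π*}[V^π(s_t)]`, the `t`-th summand on the right-hand side is
`γ^t E_{π*}[r(s_t,a_t) + ε h^{π*}_{s_t}] + (γ^(t+1) w (t+1) - γ^t w t)` (`expAt_adv`).  The first
part sums to `η(π*)`, because expectations are linear in the initial distribution
(`expAt_eq_sum_dirac`), and the second telescopes to `-w 0 = -η(π)`.  Both series converge since
expectations of a fixed function are bounded uniformly in `t` (`summable_expAt`).
Only the boundedness of `V^π` enters, not the fact that it solves the Bellman equation.
-/

open scoped BigOperators

/-- `p` is a probability distribution on the finite type `α`. -/
def IsProb {α : Type*} [Fintype α] (p : α → ℝ) : Prop :=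
  (∀ x, 0 ≤ p x) ∧ ∑ x, p x = 1

/-- Shannon entropy of a finite distribution.  The convention `0 * log 0 = 0`
holds automatically since `Real.log 0 = 0`. -/
noncomputable def entropy {α : Type*} [Fintype α] (p : α → ℝ) : ℝ :=
  -∑ x, p x * Real.log (p x)

/-- Distribution of the state `s_t` at time `t` of a trajectory generated by
the stationary policy `π` in the MDP with transition kernel `P`, started from
the initial state distribution `μ`. -/
noncomputable def stateDist {S A : Type*} [Fintype S] [Fintype A]
    (P : S → A → S → ℝ) (π : S → A → ℝ) (μ : S → ℝ) : ℕ → S → ℝ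
  | 0 => μ
  | t + 1 => fun s' => ∑ s, ∑ a, stateDist P π μ t s * π s a * P s a s'

/-- `E_{τ ∼ π}[ g (s_t, a_t) ]` for a trajectory generated by the stationary
policy `π` (with transition kernel `P`), started from `s₀ ∼ μ`. -/
noncomputable def expAt {S A : Type*} [Fintype S] [Fintype A]
    (P : S → A → S → ℝ) (π : S → A → ℝ) (μ : S → ℝ) (t : ℕ) (g : S → A → ℝ) : ℝ :=
  ∑ s, stateDist P π μ t s * ∑ a, π s a * g s a

/-- The Dirac distribution concentrated at the state `s`. -/
def dirac {S : Type*} [DecidableEq S] (s : S) : S → ℝ :=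
  fun s' => if s' = s then 1 else 0

/-- Entropy-regularized (`γ`-discounted) value function:
`V^π(s) = E[ ∑ₜ γ^t (r(s_t,a_t) + ε h^π_{s_t}) | s₀ = s ]`. -/
noncomputable def valueV {S A : Type*} [Fintype S] [Fintype A] [DecidableEq S]
    (P : S → A → S → ℝ) (r : S → A → ℝ) (π : S → A → ℝ) (ε γ : ℝ) (s : S) : ℝ :=
  ∑' t : ℕ, γ ^ t * expAt P π (dirac s) t (fun s' a => r s' a + ε * entropy (π s'))

/-- Entropy-regularized Q-function: `Q^π(s,a) = r(s,a) + γ E_{s' ∼ P(·|s,a)}[V^π(s')]`. -/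
noncomputable def valueQ {S A : Type*} [Fintype S] [Fintype A] [DecidableEq S]
    (P : S → A → S → ℝ) (r : S → A → ℝ) (π : S → A → ℝ) (ε γ : ℝ) (s : S) (a : A) : ℝ :=
  r s a + γ * ∑ s', P s a s' * valueV P r π ε γ s'

/-- Advantage function `A^π(s,a) = Q^π(s,a) - V^π(s)`. -/
noncomputable def adv {S A : Type*} [Fintype S] [Fintype A] [DecidableEq S]
    (P : S → A → S → ℝ) (r : S → A → ℝ) (π : S → A → ℝ) (ε γ : ℝ) (s : S) (a : A) : ℝ :=
  valueQ P r π ε γ s a - valueV P r π ε γ s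

lemma IsProb.le_one {α : Type*} [Fintype α] {p : α → ℝ} (hp : IsProb p) (x : α) : p x ≤ 1 :=
  hp.2 ▸ Finset.single_le_sum (fun y _ => hp.1 y) (Finset.mem_univ x)

/-- Disintegration of the time-`t` state distribution over the initial state. -/
lemma stateDist_eq_sum_dirac {S A : Type*} [Fintype S] [Fintype A] [DecidableEq S]
    (P : S → A → S → ℝ) (π : S → A → ℝ) (μ : S → ℝ) (t : ℕ) (s : S) :
    stateDist P π μ t s = ∑ s₀, μ s₀ * stateDist P π (dirac s₀) t s := by
  induction t generalizing s with
  | zero => simp [stateDist, dirac]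
  | succ t ih =>
    simp only [stateDist, Finset.mul_sum]
    symm
    rw [Finset.sum_comm]
    refine Finset.sum_congr rfl fun x _ => ?_
    rw [Finset.sum_comm]
    refine Finset.sum_congr rfl fun a _ => ?_
    rw [ih x, Finset.sum_mul, Finset.sum_mul]
    exact Finset.sum_congr rfl fun _ _ => by ring

lemma expAt_eq_sum_dirac {S A : Type*} [Fintype S] [Fintype A] [DecidableEq S]
    (P : S → A → S → ℝ) (π : S → A → ℝ) (μ : S → ℝ) (t : ℕ) (g : S → A → ℝ) :
    expAt P π μ t g = ∑ s₀, μ s₀ * expAt P π (dirac s₀) t g := by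
  simp only [expAt, Finset.mul_sum]
  symm
  rw [Finset.sum_comm]
  refine Finset.sum_congr rfl fun s _ => ?_
  rw [Finset.sum_comm]
  refine Finset.sum_congr rfl fun a _ => ?_
  rw [stateDist_eq_sum_dirac P π μ, Finset.sum_mul]
  exact Finset.sum_congr rfl fun _ _ => by ring

lemma isProb_dirac {S : Type*} [Fintype S] [DecidableEq S] (s : S) : IsProb (dirac s) := by
  refine ⟨fun x => ?_, by simp [dirac]⟩
  unfold dirac
  split_ifs <;> norm_num

lemma isProb_stateDist {S A : Type*} [Fintype S] [Fintype A]
    {P : S → A → S → ℝ} {π : S → A → ℝ} {μ : S → ℝ}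
    (hP : ∀ s a, IsProb (P s a)) (hπ : ∀ s, IsProb (π s)) (hμ : IsProb μ) (t : ℕ) :
    IsProb (stateDist P π μ t) := by
  induction t with
  | zero => exact hμ
  | succ t ih =>
    refine ⟨fun s' => Finset.sum_nonneg fun s _ => Finset.sum_nonneg fun a _ =>
      mul_nonneg (mul_nonneg (ih.1 s) ((hπ s).1 a)) ((hP s a).1 s'), ?_⟩
    simp only [stateDist]
    rw [Finset.sum_comm, ← ih.2]
    refine Finset.sum_congr rfl fun s _ => ?_
    rw [Finset.sum_comm]
    simp only [← Finset.mul_sum, (hP _ _).2, (hπ s).2, mul_one]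

lemma abs_expAt_le {S A : Type*} [Fintype S] [Fintype A]
    {P : S → A → S → ℝ} {π : S → A → ℝ} {μ : S → ℝ}
    (hP : ∀ s a, IsProb (P s a)) (hπ : ∀ s, IsProb (π s)) (hμ : IsProb μ)
    (g : S → A → ℝ) (t : ℕ) : |expAt P π μ t g| ≤ ∑ s, ∑ a, |g s a| := by
  have hd := isProb_stateDist hP hπ hμ t
  refine (Finset.abs_sum_le_sum_abs _ _).trans (Finset.sum_le_sum fun s _ => ?_)
  rw [abs_mul, abs_of_nonneg (hd.1 s)]
  refine (mul_le_of_le_one_left (abs_nonneg _) (hd.le_one s)).trans ?_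
  refine (Finset.abs_sum_le_sum_abs _ _).trans (Finset.sum_le_sum fun a _ => ?_)
  rw [abs_mul, abs_of_nonneg ((hπ s).1 a)]
  exact mul_le_of_le_one_left (abs_nonneg _) ((hπ s).le_one a)

lemma summable_expAt {S A : Type*} [Fintype S] [Fintype A]
    {P : S → A → S → ℝ} {π : S → A → ℝ} {μ : S → ℝ} {γ : ℝ}
    (hP : ∀ s a, IsProb (P s a)) (hπ : ∀ s, IsProb (π s)) (hμ : IsProb μ)
    (hγ0 : 0 ≤ γ) (hγ1 : γ < 1) (g : S → A → ℝ) :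
    Summable fun t : ℕ => γ ^ t * expAt P π μ t g := by
  refine Summable.of_norm_bounded
    ((summable_geometric_of_lt_one hγ0 hγ1).mul_right (∑ s, ∑ a, |g s a|)) fun t => ?_
  rw [Real.norm_eq_abs, abs_mul, abs_of_nonneg (pow_nonneg hγ0 t)]
  exact mul_le_mul_of_nonneg_left (abs_expAt_le hP hπ hμ g t) (pow_nonneg hγ0 t)

/-- The return `η(π)`, defined by averaging the value function over `μ`, is the expected discounted
sum along trajectories started from `μ`. -/
lemma sum_mul_valueV {S A : Type*} [Fintype S] [Fintype A] [DecidableEq S]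
    {P : S → A → S → ℝ} {π : S → A → ℝ} {γ : ℝ}
    (hP : ∀ s a, IsProb (P s a)) (hπ : ∀ s, IsProb (π s))
    (hγ0 : 0 ≤ γ) (hγ1 : γ < 1) (r : S → A → ℝ) (μ : S → ℝ) (ε : ℝ) :
    ∑ s, μ s * valueV P r π ε γ s =
      ∑' t : ℕ, γ ^ t * expAt P π μ t (fun s a => r s a + ε * entropy (π s)) := by
  have hs := fun s : S => summable_expAt hP hπ (isProb_dirac s) hγ0 hγ1
    (fun s a => r s a + ε * entropy (π s))
  simp only [valueV, ← tsum_mul_left]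
  rw [← Summable.tsum_finsetSum fun s _ => (hs s).mul_left (μ s)]
  refine tsum_congr fun t => ?_
  rw [expAt_eq_sum_dirac, Finset.mul_sum]
  exact Finset.sum_congr rfl fun _ _ => by ring

/-- A function of the state alone has the same expectation under the state distribution. -/
lemma expAt_state {S A : Type*} [Fintype S] [Fintype A]
    (P : S → A → S → ℝ) {π : S → A → ℝ} (μ : S → ℝ) (hπ : ∀ s, IsProb (π s))
    (t : ℕ) (v : S → ℝ) :
    expAt P π μ t (fun s _ => v s) = ∑ s, stateDist P π μ t s * v s := by
  simp only [expAt, ← Finset.sum_mul, (hπ _).2, one_mul]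

/-- Tower property: averaging the one-step conditional expectation of `v` at time `t` gives the
expectation of `v` at time `t + 1`. -/
lemma expAt_next {S A : Type*} [Fintype S] [Fintype A]
    (P : S → A → S → ℝ) {π : S → A → ℝ} (μ : S → ℝ) (hπ : ∀ s, IsProb (π s))
    (t : ℕ) (v : S → ℝ) :
    expAt P π μ t (fun s a => ∑ s', P s a s' * v s') =
      expAt P π μ (t + 1) (fun s _ => v s) := by
  rw [expAt_state P μ hπ]
  simp only [expAt, stateDist, Finset.mul_sum, Finset.sum_mul]
  symm
  rw [Finset.sum_comm]
  refine Finset.sum_congr rfl fun s _ => ?_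
  rw [Finset.sum_comm]
  exact Finset.sum_congr rfl fun _ _ => Finset.sum_congr rfl fun _ _ => by ring

lemma expAt_adv {S A : Type*} [Fintype S] [Fintype A] [DecidableEq S]
    (P : S → A → S → ℝ) (r : S → A → ℝ) (μ : S → ℝ) (π : S → A → ℝ) {πstar : S → A → ℝ}
    (ε γ : ℝ) (hπstar : ∀ s, IsProb (πstar s)) (t : ℕ) :
    expAt P πstar μ t (fun s a => adv P r π ε γ s a + ε * entropy (πstar s)) =
      expAt P πstar μ t (fun s a => r s a + ε * entropy (πstar s)) +
        (γ * expAt P πstar μ (t + 1) (fun s _ => valueV P r π ε γ s) -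
          expAt P πstar μ t (fun s _ => valueV P r π ε γ s)) := by
  rw [← expAt_next P μ hπstar]
  simp only [expAt, adv, valueQ]
  rw [Finset.mul_sum, ← Finset.sum_sub_distrib, ← Finset.sum_add_distrib]
  refine Finset.sum_congr rfl fun s _ => ?_
  rw [mul_left_comm γ, ← mul_sub, ← mul_add, Finset.mul_sum _ _ γ, ← Finset.sum_sub_distrib,
    ← Finset.sum_add_distrib]
  congr 1
  exact Finset.sum_congr rfl fun _ _ => by ring

/-- **Performance-difference identity with demonstrations** (discounted case):
`η(π*) − η(π) = E_{τ∼π*}[ ∑ₜ γ^t (A^π(s_t,a_t) + ε h^{π*}_{s_t}) ]`. -/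
theorem perf_diff_discounted {S A : Type*} [Fintype S] [Fintype A] [DecidableEq S]
    [Nonempty S] [Nonempty A]
    (P : S → A → S → ℝ) (r : S → A → ℝ) (μ : S → ℝ) (π πstar : S → A → ℝ) (ε γ : ℝ)
    (hP : ∀ s a, IsProb (P s a)) (hπ : ∀ s, IsProb (π s)) (hπstar : ∀ s, IsProb (πstar s))
    (hμ : IsProb μ) (hε : 0 < ε) (hγ0 : 0 ≤ γ) (hγ1 : γ < 1) :
    (∑ s, μ s * valueV P r πstar ε γ s) - (∑ s, μ s * valueV P r π ε γ s) =
      ∑' t : ℕ, γ ^ t *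
        expAt P πstar μ t (fun s a => adv P r π ε γ s a + ε * entropy (πstar s)) := by
  set W : ℕ → ℝ := fun t => γ ^ t * expAt P πstar μ t (fun s _ => valueV P r π ε γ s) with hW
  have hWs : Summable W := summable_expAt hP hπstar hμ hγ0 hγ1 _
  have hWs' : Summable fun t => W (t + 1) := (summable_nat_add_iff 1).2 hWs
  have hR := summable_expAt hP hπstar hμ hγ0 hγ1 (fun s a => r s a + ε * entropy (πstar s))
  have hW0 : W 0 = ∑ s, μ s * valueV P r π ε γ s := by
    simp [hW, expAt_state P μ hπstar, stateDist]
  have hterm : ∀ t : ℕ, γ ^ t *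
      expAt P πstar μ t (fun s a => adv P r π ε γ s a + ε * entropy (πstar s)) =
      γ ^ t * expAt P πstar μ t (fun s a => r s a + ε * entropy (πstar s)) +
        (W (t + 1) - W t) := fun t => by
    rw [expAt_adv P r μ π ε γ hπstar]
    simp only [hW]
    ring
  rw [tsum_congr hterm, hR.tsum_add (hWs'.sub hWs), hWs'.tsum_sub hWs, hWs.tsum_eq_zero_add, hW0,
    sum_mul_valueV hP hπstar hγ0 hγ1]
  ring
end

section
/- Let A be a nonempty finite set, Q : A → ℝ, ε > 0, and let π(a) = exp(Q(a)/ε) / Σ_{a'} exp(Q(a')/ε) be the softmax distribution. Then for every a ∈ A, the softmax-policy advantage equals the scaled log-probability: Q(a) − Σ_{a'} π(a') Q(a') + ε Σ_{a'} π(a') log π(a') = ε log π(a). (This is the identity underlying the equivalence between the undecoupled demonstration policy-evaluation gradient and the behavior-cloning cross-entropy gradient.) -/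
/-!
Write `Z = ∑ a', exp (Q a' / ε)`. Taking logarithms in the definition of the softmax gives
`ε * log (π b) = Q b - ε * log Z` for every `b`. Averaging this over `b ∼ π`, with `∑ π = 1`, gives
`ε * ∑ π * log π = ∑ π * Q - ε * log Z`; substituting both formulas proves the identity.
-/

open scoped BigOperators

/-- The softmax distribution associated to `Q` and temperature `ε`:
`softmax Q ε a = exp(Q a / ε) / ∑_{a'} exp(Q a' / ε)`. -/
noncomputable def softmax {α : Type*} [Fintype α] (Q : α → ℝ) (ε : ℝ) : α → ℝ :=
  fun a => Real.exp (Q a / ε) / ∑ a', Real.exp (Q a' / ε)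

/-- **Softmax-policy advantage equals the scaled log-probability**: for every `a`,
`Q a − ∑_{a'} π a' * Q a' + ε ∑_{a'} π a' * log (π a') = ε log (π a)`,
where `π = softmax Q ε`.  (This is the identity underlying the equivalence between
the undecoupled demonstration policy-evaluation gradient and the behavior-cloning
cross-entropy gradient.) -/
theorem softmax_advantage_eq_log_prob {A : Type*} [Fintype A] [Nonempty A]
    (Q : A → ℝ) (ε : ℝ) (hε : 0 < ε) :
    ∀ a : A,
      Q a - (∑ a', softmax Q ε a' * Q a') +
          ε * ∑ a', softmax Q ε a' * Real.log (softmax Q ε a') =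
        ε * Real.log (softmax Q ε a) := by
  intro a
  set Z := ∑ a', Real.exp (Q a' / ε) with hZ
  have hZpos : 0 < Z := Finset.sum_pos (fun _ _ => Real.exp_pos _) Finset.univ_nonempty
  have hlog : ∀ b, ε * Real.log (softmax Q ε b) = Q b - ε * Real.log Z := by
    intro b
    rw [softmax, ← hZ, Real.log_div (Real.exp_pos _).ne' hZpos.ne', Real.log_exp]
    field_simp
  have hsum : ∑ b, softmax Q ε b = 1 := by
    simp only [softmax, ← hZ]
    rw [← Finset.sum_div, ← hZ, div_self hZpos.ne']
  have hent : ε * ∑ b, softmax Q ε b * Real.log (softmax Q ε b) =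
      (∑ b, softmax Q ε b * Q b) - ε * Real.log Z := by
    calc ε * ∑ b, softmax Q ε b * Real.log (softmax Q ε b)
        = ∑ b, softmax Q ε b * (Q b - ε * Real.log Z) := by
          rw [Finset.mul_sum]
          refine Finset.sum_congr rfl fun b _ => ?_
          rw [← hlog b, mul_left_comm]
      _ = (∑ b, softmax Q ε b * Q b) - ε * Real.log Z := by
          simp only [mul_sub, Finset.sum_sub_distrib]
          rw [← Finset.sum_mul, hsum, one_mul]
  rw [hent, hlog a]
  ring
end
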